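/- Let q be a complex number with 0 < |q| < 1. Then ((q^2;q^2)_∞ / (q;q)_∞)^3 = (1/((q;q)_∞ (q^2;q^2)_∞)) · Σ_{n=0}^∞ (−1)^n q^{n^2+n} · (1 + q^{2n+1})/(1 − q^{2n+1}). -/

import Mathlib

/-!
The product `(z;q)_∞ (q/z;q)_∞` has the factors `θ_j(z) = (1 - z q^j) (1 - q^(j+1)/z)`, and
`θ_j(z) = q^j (x(q^(-j)) - x(z))` with `x(z) = z + q/z`. Thus `∏_{j ≠ n} θ_j(z) / θ_j(q^(-n))`, over
`j ≤ N`, is the `n`-th Lagrange basis polynomial for the nodes `x(q^(-j))`, evaluated at `x(z)`, and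
these add up to `1`. Dividing by `∏_{j ≤ N} θ_j(z)` expands its inverse in partial fractions, and
letting `N → ∞` by dominated convergence gives
`(q;q)_∞^2 / ((z;q)_∞ (q/z;q)_∞) = ∑_{n ≥ 0} (-1)^n q^(n(n+1)/2) (1 - q^(2n+1)) / θ_n(z)`.
The theorem is this expansion with `(q, q^2)` in place of `(z, q)`: there `θ_n = (1 - q^(2n+1))^2`,
and `(q;q)_∞ = (q;q^2)_∞ (q^2;q^2)_∞`.
-/

open Finset

/-- Infinite q-Pochhammer symbol `(a;q)_∞`. -/
noncomputable def qPochInf (a q : ℂ) : ℂ := ∏' j : ℕ, (1 - a * q ^ j)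

open Filter Topology

/-- The finite q-Pochhammer symbol `(a;q)_n`. -/
def qPoch {R : Type*} [CommRing R] (a q : R) (n : ℕ) : R := ∏ j ∈ range n, (1 - a * q ^ j)

/-- The `j`-th factor of the product `(z;q)_∞ (q/z;q)_∞`, which is a theta function of `z`. -/
def thetaFactor {K : Type*} [Field K] (q z : K) (j : ℕ) : K := (1 - z * q ^ j) * (1 - q / z * q ^ j)

/-- The coordinate `z + q / z`, invariant under `z ↦ q / z`, in which each `thetaFactor` is affine
linear. -/
def thetaCoord {K : Type*} [Field K] (q z : K) : K := z + q / z

/-- The `n`-th term of the partial fraction expansion of `(q;q)_∞^2 / ((z;q)_∞ (q/z;q)_∞)`; it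
collects the contributions of the poles `z = q^(-n)` and `z = q^(n+1)`. -/
def thetaFraction {K : Type*} [Field K] (q z : K) (n : ℕ) : K :=
  (-1) ^ n * q ^ (n + 1).choose 2 * (1 - q ^ (2 * n + 1)) / thetaFactor q z n

lemma prod_erase_range_add {M : Type*} [CommMonoid M] (f : ℕ → M) (n k : ℕ) :
    ∏ j ∈ (range (n + k + 1)).erase n, f j
      = (∏ j ∈ range n, f j) * ∏ j ∈ range k, f (n + 1 + j) := by
  induction k with
  | zero => simp [range_add_one]
  | succ k ih =>
    rw [range_add_one, erase_insert_of_ne (by lia), prod_insert (by simp), ← add_assoc n k 1, ih,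
      prod_range_succ, mul_comm, mul_assoc, add_right_comm n 1 k]

lemma pow_injective_of_isUnit {M : Type*} [Monoid M] {a : M} (ha : IsUnit a)
    (h : ¬IsOfFinOrder a) : Function.Injective fun n : ℕ ↦ a ^ n := by
  lift a to Mˣ using ha
  rw [Units.isOfFinOrder_val] at h
  exact fun m n hmn ↦ injective_pow_iff_not_isOfFinOrder.mpr h (Units.ext (by simpa using hmn))

lemma one_sub_pow_ne_zero {R : Type*} [Ring R] {a : R} (ha : ¬IsOfFinOrder a) {n : ℕ}
    (hn : n ≠ 0) : 1 - a ^ n ≠ 0 :=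
  fun h ↦ ha <| isOfFinOrder_iff_pow_eq_one.mpr
    ⟨n, Nat.pos_of_ne_zero hn, (sub_eq_zero.mp h).symm⟩

lemma qPoch_add {R : Type*} [CommRing R] (a q : R) (m n : ℕ) :
    qPoch a q (m + n) = qPoch a q m * qPoch (a * q ^ m) q n := by
  simp only [qPoch, prod_range_add, pow_add, mul_assoc]

lemma qPoch_self_ne_zero {R : Type*} [CommRing R] [IsDomain R] {q : R} (hq : ¬IsOfFinOrder q)
    (n : ℕ) : qPoch q q n ≠ 0 :=
  prod_ne_zero_iff.mpr fun j _ ↦ by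
    rw [← pow_succ']
    exact one_sub_pow_ne_zero hq j.succ_ne_zero

section Field

variable {K : Type*} [Field K] {q z : K}

lemma qPoch_inv_pow_mul_pow (hq0 : q ≠ 0) (n : ℕ) :
    qPoch (q ^ n)⁻¹ q n * q ^ (n + 1).choose 2 = (-1) ^ n * qPoch q q n := by
  have factor (j : ℕ) (hj : j ∈ range n) :
      1 - (q ^ n)⁻¹ * q ^ (n - 1 - j) = -(1 - q * q ^ j) * (q ^ (j + 1))⁻¹ := by
    obtain ⟨d, rfl⟩ := Nat.exists_eq_add_of_lt (mem_range.mp hj)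
    rw [show j + d + 1 - 1 - j = d by lia]
    field_simp
    ring
  have powers : q ^ (n + 1).choose 2 = ∏ j ∈ range n, q ^ (j + 1) := by
    rw [prod_pow_eq_pow_sum, Nat.choose_two_right, ← sum_range_id, sum_range_succ', add_zero]
  rw [qPoch, ← prod_range_reflect, prod_congr rfl factor, prod_mul_distrib, prod_neg, card_range,
    prod_inv_distrib, ← powers, inv_mul_cancel_right₀ (pow_ne_zero _ hq0), qPoch]

lemma prod_thetaFactor (q z : K) (n : ℕ) :
    ∏ j ∈ range n, thetaFactor q z j = qPoch z q n * qPoch (q / z) q n :=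
  prod_mul_distrib

lemma thetaFactor_eq_mul_sub (hq0 : q ≠ 0) (hz0 : z ≠ 0) (j : ℕ) :
    thetaFactor q z j = q ^ j * (thetaCoord q (q ^ j)⁻¹ - thetaCoord q z) := by
  unfold thetaFactor thetaCoord
  field_simp
  ring

lemma thetaFactor_inv_pow_ne_zero (hq0 : q ≠ 0) (hq : ¬IsOfFinOrder q) {i j : ℕ} (hij : i ≠ j) :
    thetaFactor q (q ^ i)⁻¹ j ≠ 0 := by
  refine mul_ne_zero (fun h ↦ hij ?_) ?_
  · rw [sub_eq_zero, eq_comm, inv_mul_eq_one₀ (pow_ne_zero i hq0)] at h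
    exact pow_injective_of_isUnit hq0.isUnit hq h
  · rw [div_inv_eq_mul, ← pow_succ', ← pow_add]
    exact one_sub_pow_ne_zero hq (by lia)

lemma thetaCoord_inv_pow_injective (hq0 : q ≠ 0) (hq : ¬IsOfFinOrder q) :
    Function.Injective fun j : ℕ ↦ thetaCoord q (q ^ j)⁻¹ := by
  intro i j (h : thetaCoord q (q ^ i)⁻¹ = thetaCoord q (q ^ j)⁻¹)
  by_contra hij
  apply thetaFactor_inv_pow_ne_zero hq0 hq hij
  rw [thetaFactor_eq_mul_sub hq0 (inv_ne_zero (pow_ne_zero i hq0)), h, sub_self, mul_zero]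

lemma sum_prod_thetaFactor_div (hq0 : q ≠ 0) (hq : ¬IsOfFinOrder q) (hz0 : z ≠ 0) (N : ℕ) :
    ∑ n ∈ range (N + 1), ∏ j ∈ (range (N + 1)).erase n,
      thetaFactor q z j / thetaFactor q (q ^ n)⁻¹ j = 1 := by
  have basis_sum := congrArg (Polynomial.eval (thetaCoord q z)) <|
    Lagrange.sum_basis (thetaCoord_inv_pow_injective hq0 hq).injOn (nonempty_range_add_one (n := N))
  rw [Polynomial.eval_finsetSum, Polynomial.eval_one] at basis_sum
  rw [← basis_sum]
  refine sum_congr rfl fun n _ ↦ ?_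
  rw [Lagrange.basis, Polynomial.eval_prod]
  refine prod_congr rfl fun j _ ↦ ?_
  rw [thetaFactor_eq_mul_sub hq0 hz0, thetaFactor_eq_mul_sub hq0 (inv_ne_zero (pow_ne_zero n hq0)),
    mul_div_mul_left _ _ (pow_ne_zero j hq0), ← neg_sub, ← neg_sub (thetaCoord q (q ^ n)⁻¹),
    neg_div_neg_eq, div_eq_inv_mul]
  simp [Lagrange.basisDivisor]

lemma prod_thetaFactor_inv_pow_mul (hq0 : q ≠ 0) (n k : ℕ) :
    (∏ j ∈ (range (n + k + 1)).erase n, thetaFactor q (q ^ n)⁻¹ j)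
        * (q ^ (n + 1).choose 2 * (1 - q ^ (2 * n + 1)))
      = (-1) ^ n * (qPoch q q k * qPoch q q (n + k + n + 1)) := by
  have left : ∏ j ∈ (range (n + k + 1)).erase n, (1 - (q ^ n)⁻¹ * q ^ j)
      = qPoch (q ^ n)⁻¹ q n * qPoch q q k := by
    rw [prod_erase_range_add, qPoch, qPoch]
    congr! 3 with j
    rw [add_assoc, pow_add, inv_mul_cancel_left₀ (pow_ne_zero n hq0), pow_add, pow_one]
  have right : (∏ j ∈ (range (n + k + 1)).erase n, (1 - q / (q ^ n)⁻¹ * q ^ j))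
      * (1 - q ^ (2 * n + 1)) = qPoch (q * q ^ n) q (n + k + 1) := by
    rw [show q ^ (2 * n + 1) = q / (q ^ n)⁻¹ * q ^ n by rw [div_inv_eq_mul]; ring,
      prod_erase_mul _ _ (by simp), div_inv_eq_mul, qPoch]
  have total : qPoch q q (n + k + n + 1) = qPoch q q n * qPoch (q * q ^ n) q (n + k + 1) := by
    rw [← qPoch_add]
    congr 1
    ring
  have reflected := qPoch_inv_pow_mul_pow hq0 n
  simp only [thetaFactor, prod_mul_distrib]
  rw [left, total, ← right]
  linear_combination (qPoch q q k * (∏ j ∈ (range (n + k + 1)).erase n,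
    (1 - q / (q ^ n)⁻¹ * q ^ j)) * (1 - q ^ (2 * n + 1))) * reflected

theorem inv_qPoch_mul_qPoch_eq_sum (hq0 : q ≠ 0) (hq : ¬IsOfFinOrder q) (hz0 : z ≠ 0) (N : ℕ)
    (hz : ∀ j ∈ range (N + 1), thetaFactor q z j ≠ 0) :
    (qPoch z q (N + 1) * qPoch (q / z) q (N + 1))⁻¹ = ∑ n ∈ range (N + 1),
      thetaFraction q z n * ((qPoch q q (N - n))⁻¹ * (qPoch q q (N + n + 1))⁻¹) := by
  rw [← prod_thetaFactor, ← mul_one (∏ j ∈ _, _)⁻¹, ← sum_prod_thetaFactor_div hq0 hq hz0 N,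
    mul_sum]
  refine sum_congr rfl fun n hn ↦ ?_
  obtain ⟨k, rfl⟩ := Nat.exists_eq_add_of_le (Nat.lt_succ_iff.mp (mem_range.mp hn))
  rw [prod_div_distrib, ← mul_prod_erase _ _ hn, Nat.add_sub_cancel_left]
  have weight := prod_thetaFactor_inv_pow_mul hq0 n k
  have num_ne : ∏ j ∈ (range (n + k + 1)).erase n, thetaFactor q z j ≠ 0 :=
    prod_ne_zero_iff.mpr fun j hj ↦ hz j (mem_of_mem_erase hj)
  have den_ne : ∏ j ∈ (range (n + k + 1)).erase n, thetaFactor q (q ^ n)⁻¹ j ≠ 0 :=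
    prod_ne_zero_iff.mpr fun j hj ↦ thetaFactor_inv_pow_ne_zero hq0 hq (ne_of_mem_erase hj).symm
  have factor_ne := hz n hn
  have left_ne := qPoch_self_ne_zero hq k
  have right_ne := qPoch_self_ne_zero hq (n + k + n + 1)
  have sign : (-1 : K) ^ n * (-1) ^ n = 1 := by simp [← mul_pow]
  rw [thetaFraction]
  generalize ∏ j ∈ (range (n + k + 1)).erase n, thetaFactor q z j = num at *
  generalize ∏ j ∈ (range (n + k + 1)).erase n, thetaFactor q (q ^ n)⁻¹ j = den at *
  field_simp
  linear_combination -(-1) ^ n * weight - qPoch q q k * qPoch q q (n + k + n + 1) * sign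

lemma thetaFactor_sq_self (hq0 : q ≠ 0) (n : ℕ) :
    thetaFactor (q ^ 2) q n = (1 - q ^ (2 * n + 1)) ^ 2 := by
  rw [thetaFactor, sq q, mul_div_cancel_right₀ _ hq0]
  ring

lemma thetaFraction_sq_self (hq0 : q ≠ 0) (hq : ¬IsOfFinOrder q) (n : ℕ) :
    thetaFraction (q ^ 2) q n
      = (-1) ^ n * q ^ (n ^ 2 + n) * ((1 + q ^ (2 * n + 1)) / (1 - q ^ (2 * n + 1))) := by
  have pole_ne : 1 - q ^ (2 * n + 1) ≠ 0 :=
    one_sub_pow_ne_zero hq (Nat.succ_ne_zero _)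
  have exponent : (q ^ 2) ^ (n + 1).choose 2 = q ^ (n ^ 2 + n) := by
    rw [← pow_mul, mul_comm, Nat.choose_two_right, ← sum_range_id, sum_range_id_mul_two]
    congr 1
    rw [Nat.add_sub_cancel]
    ring
  rw [thetaFraction, thetaFactor_sq_self hq0, exponent]
  field_simp
  ring

end Field

lemma tendsto_sum_range_mul_of_summable_norm {R : Type*} [NormedRing R] [CompleteSpace R]
    {f u v : ℕ → R} {a b : R} (hf : Summable (‖f ·‖)) (hu : Tendsto u atTop (𝓝 a))
    (hv : Tendsto v atTop (𝓝 b)) :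
    Tendsto (fun N ↦ ∑ n ∈ range (N + 1), f n * (u (N - n) * v (N + n + 1))) atTop
      (𝓝 ((∑' n, f n) * (a * b))) := by
  obtain ⟨A, hA⟩ := hu.norm.bddAbove_range
  obtain ⟨B, hB⟩ := hv.norm.bddAbove_range
  simp_rw [sum_eq_tsum_indicator _ _ (SummationFilter.unconditional ℕ), ← hf.of_norm.tsum_mul_right]
  refine tendsto_tsum_of_dominated_convergence (hf.mul_right (A * B)) (fun n ↦ ?_)
    (Eventually.of_forall fun N n ↦ ?_)
  · have shifted := ((hu.comp (tendsto_sub_atTop_nat n)).mul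
      (hv.comp (tendsto_add_atTop_nat (n + 1)))).const_mul (f n)
    refine shifted.congr' ?_
    filter_upwards [eventually_ge_atTop n] with N hN
    rw [Set.indicator_of_mem (by simpa using Nat.lt_succ_of_le hN)]
    rfl
  · have hA' := hA ⟨N - n, rfl⟩
    have hB' := hB ⟨N + n + 1, rfl⟩
    refine (norm_indicator_le_norm_self _ _).trans ((norm_mul_le _ _).trans ?_)
    gcongr
    refine (norm_mul_le _ _).trans ?_
    gcongr
    exact (norm_nonneg _).trans hA'

section NormedField

variable {𝕜 : Type*} [NormedField 𝕜] {q : 𝕜}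

lemma norm_sq_lt_one (hq1 : ‖q‖ < 1) : ‖q ^ 2‖ < 1 := by
  simpa only [norm_pow] using pow_lt_one₀ (norm_nonneg q) hq1 two_ne_zero

lemma not_isOfFinOrder_of_norm_lt_one (hq1 : ‖q‖ < 1) : ¬IsOfFinOrder q :=
  fun h ↦ hq1.ne h.norm_eq_one

lemma summable_norm_neg_mul_pow (a : 𝕜) (hq1 : ‖q‖ < 1) :
    Summable fun j : ℕ ↦ ‖-(a * q ^ j)‖ := by
  simpa only [norm_neg, norm_mul, norm_pow] using
    (summable_geometric_of_lt_one (norm_nonneg q) hq1).mul_left ‖a‖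

lemma multipliable_one_sub_mul_pow [CompleteSpace 𝕜] (a : 𝕜) (hq1 : ‖q‖ < 1) :
    Multipliable fun j : ℕ ↦ 1 - a * q ^ j := by
  simpa only [sub_eq_add_neg] using
    multipliable_one_add_of_summable (summable_norm_neg_mul_pow a hq1)

lemma tendsto_one_sub_mul_pow (a : 𝕜) (hq1 : ‖q‖ < 1) :
    Tendsto (fun j : ℕ ↦ 1 - a * q ^ j) atTop (𝓝 1) := by
  simpa using ((tendsto_pow_atTop_nhds_zero_of_norm_lt_one hq1).const_mul a).const_sub 1

lemma tendsto_thetaFactor (z : 𝕜) (hq1 : ‖q‖ < 1) : Tendsto (thetaFactor q z) atTop (𝓝 1) := by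
  simpa only [mul_one] using!
    (tendsto_one_sub_mul_pow z hq1).mul (tendsto_one_sub_mul_pow (q / z) hq1)

lemma summable_norm_thetaFraction (z : 𝕜) (hq1 : ‖q‖ < 1) :
    Summable (‖thetaFraction q z ·‖) := by
  have gaussian : Summable fun n : ℕ ↦ ‖(-1) ^ n * q ^ (n + 1).choose 2‖ := by
    refine (summable_geometric_of_lt_one (norm_nonneg q) hq1).of_nonneg_of_le
      (fun n ↦ norm_nonneg _) fun n ↦ ?_
    rw [norm_mul, norm_pow, norm_pow, norm_neg, norm_one, one_pow, one_mul]
    refine pow_le_pow_of_le_one (norm_nonneg q) hq1.le ?_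
    rw [Nat.choose_succ_succ', Nat.choose_one_right]
    exact Nat.le_add_right _ _
  have tail : Tendsto (fun n : ℕ ↦ (1 - q ^ (2 * n + 1)) / thetaFactor q z n) atTop (𝓝 1) := by
    simpa only [div_one, ← pow_mul, ← pow_succ'] using!
      (tendsto_one_sub_mul_pow q (norm_sq_lt_one hq1)).div (tendsto_thetaFactor z hq1) one_ne_zero
  have product := gaussian.norm.mul_tendsto_const (Nat.cofinite_eq_atTop ▸ tail.norm)
  simpa only [thetaFraction, mul_div_assoc, norm_mul, norm_div] using product

end NormedField

section Complex

variable {q : ℂ}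

lemma tendsto_qPoch (a : ℂ) (hq1 : ‖q‖ < 1) :
    Tendsto (qPoch a q) atTop (𝓝 (qPochInf a q)) :=
  (multipliable_one_sub_mul_pow a hq1).tendsto_prod_tprod_nat

lemma qPochInf_ne_zero {a : ℂ} (hq1 : ‖q‖ < 1) (ha : ∀ j : ℕ, 1 - a * q ^ j ≠ 0) :
    qPochInf a q ≠ 0 := by
  simp only [qPochInf, sub_eq_add_neg] at ha ⊢
  exact tprod_one_add_ne_zero_of_summable ha (summable_norm_neg_mul_pow a hq1)

lemma qPochInf_self_ne_zero (hq1 : ‖q‖ < 1) : qPochInf q q ≠ 0 :=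
  qPochInf_ne_zero hq1 fun j ↦ by
    rw [← pow_succ']
    exact one_sub_pow_ne_zero (not_isOfFinOrder_of_norm_lt_one hq1) j.succ_ne_zero

lemma qPochInf_even_mul_odd (a : ℂ) (hq1 : ‖q‖ < 1) :
    qPochInf a (q ^ 2) * qPochInf (a * q) (q ^ 2) = qPochInf a q := by
  have even (j : ℕ) : a * (q ^ 2) ^ j = a * q ^ (2 * j) := by rw [pow_mul]
  have odd (j : ℕ) : a * q * (q ^ 2) ^ j = a * q ^ (2 * j + 1) := by ring
  have even_multipliable := multipliable_one_sub_mul_pow a (norm_sq_lt_one hq1)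
  have odd_multipliable := multipliable_one_sub_mul_pow (a * q) (norm_sq_lt_one hq1)
  simp only [qPochInf, even, odd] at even_multipliable odd_multipliable ⊢
  exact tprod_even_mul_odd (f := fun j ↦ 1 - a * q ^ j) even_multipliable odd_multipliable

theorem hasSum_thetaFraction {z : ℂ} (hq0 : q ≠ 0) (hq1 : ‖q‖ < 1) (hz0 : z ≠ 0)
    (hz : ∀ j, thetaFactor q z j ≠ 0) :
    HasSum (thetaFraction q z) (qPochInf q q ^ 2 / (qPochInf z q * qPochInf (q / z) q)) := by
  have hsum := summable_norm_thetaFraction z hq1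
  have hP := qPochInf_self_ne_zero hq1
  have hθ : qPochInf z q * qPochInf (q / z) q ≠ 0 := mul_ne_zero
    (qPochInf_ne_zero hq1 fun j ↦ left_ne_zero_of_mul (hz j))
    (qPochInf_ne_zero hq1 fun j ↦ right_ne_zero_of_mul (hz j))
  have inv_tendsto := (tendsto_qPoch q hq1).inv₀ hP
  have lhs := ((((tendsto_qPoch z hq1).mul (tendsto_qPoch (q / z) hq1)).inv₀ hθ).comp
    (tendsto_add_atTop_nat 1)).congr fun N ↦ inv_qPoch_mul_qPoch_eq_sum hq0
      (not_isOfFinOrder_of_norm_lt_one hq1) hz0 N fun j _ ↦ hz j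
  have rhs := tendsto_sum_range_mul_of_summable_norm hsum inv_tendsto inv_tendsto
  have limits_eq : (qPochInf z q * qPochInf (q / z) q)⁻¹
      = (∑' n, thetaFraction q z n) * ((qPochInf q q)⁻¹ * (qPochInf q q)⁻¹) :=
    tendsto_nhds_unique lhs rhs
  rw [hsum.of_norm.hasSum_iff, div_eq_mul_inv, limits_eq]
  field_simp

end Complex

/-- `((q^2;q^2)_∞/(q;q)_∞)^3
    = (1/((q;q)_∞ (q^2;q^2)_∞)) Σ_{n≥0} (−1)^n q^{n^2+n} (1+q^{2n+1})/(1−q^{2n+1})`. -/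
theorem statement3 (q : ℂ) (hq0 : 0 < ‖q‖) (hq1 : ‖q‖ < 1) :
    (qPochInf (q ^ 2) (q ^ 2) / qPochInf q q) ^ 3
      = 1 / (qPochInf q q * qPochInf (q ^ 2) (q ^ 2)) *
        ∑' n : ℕ, (-1 : ℂ) ^ n * q ^ (n ^ 2 + n) *
          ((1 + q ^ (2 * n + 1)) / (1 - q ^ (2 * n + 1))) := by
  have hq0' : q ≠ 0 := norm_pos_iff.mp hq0
  have hq : ¬IsOfFinOrder q := not_isOfFinOrder_of_norm_lt_one hq1
  have hθ (n : ℕ) : thetaFactor (q ^ 2) q n ≠ 0 := by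
    rw [thetaFactor_sq_self hq0']
    exact pow_ne_zero 2 (one_sub_pow_ne_zero hq (Nat.succ_ne_zero _))
  have expansion := hasSum_thetaFraction (pow_ne_zero 2 hq0') (norm_sq_lt_one hq1) hq0' hθ
  rw [funext (thetaFraction_sq_self hq0' hq), show q ^ 2 / q = q by field_simp] at expansion
  have split : qPochInf q (q ^ 2) * qPochInf (q ^ 2) (q ^ 2) = qPochInf q q := by
    simpa only [← sq] using qPochInf_even_mul_odd q hq1
  have hQ : qPochInf (q ^ 2) (q ^ 2) ≠ 0 := qPochInf_self_ne_zero (norm_sq_lt_one hq1)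
  rw [expansion.tsum_eq, ← split]
  field_simp
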